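/- Let d = 1 and assume the walk is not simple, i.e., a(z) > 0 for some integer z with |z| ≥ 2. Then for all x ∈ ℤ and y ∈ ℤ with y ≠ 0, the constant C_1(x, y) := (ρ_1(y-x) + ρ_1(x) - ρ_1(y)) / (4aπγ_1) + aπ y² γ_1³ (ρ_1(y-x) - ρ_1(x) - ρ_1(y)) / ρ_1(y)² + 2aπ x y γ_1³ / ρ_1(y) is strictly positive. -/

import Mathlib

open MeasureTheory Real Filter Topology Asymptotics

/-- Fourier symbol `φ(θ) = ∑_z a(z) cos(zθ)` of the random walk on `ℤ`. -/
noncomputable def phi1 (a : ℤ → ℝ) (θ : ℝ) : ℝ :=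
  ∑' z : ℤ, a z * Real.cos ((z : ℝ) * θ)

/-- Transition probability `p(t;x,y) = (2π)⁻¹ ∫_{-π}^{π} e^{φ(θ)t} cos(θ(y-x)) dθ`. -/
noncomputable def p1 (a : ℤ → ℝ) (t : ℝ) (x y : ℤ) : ℝ :=
  (2 * π)⁻¹ * ∫ θ in (-π)..π, Real.exp (phi1 a θ * t) * Real.cos (θ * ((y : ℝ) - (x : ℝ)))

/-- Laplace transform `G_λ(x,y) = ∫_0^∞ e^{-λt} p(t;x,y) dt`. -/
noncomputable def G1 (a : ℤ → ℝ) (lam : ℝ) (x y : ℤ) : ℝ :=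
  ∫ t in Set.Ioi (0 : ℝ), Real.exp (-lam * t) * p1 a t x y

/-- `φ''(0) = -∑_z a(z) z²`. -/
noncomputable def phi1'' (a : ℤ → ℝ) : ℝ := -∑' z : ℤ, a z * (z : ℝ) ^ 2

/-- `γ₁ = 1/√(2π |φ''(0)|)`. -/
noncomputable def gam1 (a : ℤ → ℝ) : ℝ := 1 / Real.sqrt (2 * π * |phi1'' a|)

/-- `ρ₁(r) = (a/(2π)) ∫_{-π}^{π} (cos(rθ) - 1)/φ(θ) dθ` for `r ≠ 0`, and `ρ₁(0) = 1`. -/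
noncomputable def rho1 (a : ℤ → ℝ) (r : ℤ) : ℝ :=
  if r = 0 then 1 else
    (-(a 0) / (2 * π)) * ∫ θ in (-π)..π, (Real.cos ((r : ℝ) * θ) - 1) / phi1 a θ

/-- `γ̃₁(r) = (r²/(4π)) ∫_ℝ v² e^{φ''(0)v²/2} dv`. -/
noncomputable def gamTilde1 (a : ℤ → ℝ) (r : ℤ) : ℝ :=
  ((r : ℝ) ^ 2 / (4 * π)) * ∫ v : ℝ, v ^ 2 * Real.exp (phi1'' a * v ^ 2 / 2)

/-- The constant `C₁(x,y)` from Theorem 1 of the paper (with `a = -a(0)`). -/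
noncomputable def C1Const (a : ℤ → ℝ) (x y : ℤ) : ℝ :=
  (rho1 a (y - x) + rho1 a x - rho1 a y) / (4 * (-(a 0)) * π * gam1 a) +
    (-(a 0)) * π * (y : ℝ) ^ 2 * gam1 a ^ 3 *
      (rho1 a (y - x) - rho1 a x - rho1 a y) / (rho1 a y) ^ 2 +
    2 * (-(a 0)) * π * (x : ℝ) * (y : ℝ) * gam1 a ^ 3 / rho1 a y

/-!
The potential kernel `K(r) = (a / 2π) ∫ (cos rθ - 1) / φ(θ) dθ` agrees with `ρ₁` off the origin, and
`∑_z a(z) K(x + z) = 0` for `x ≠ 0`. Since `1 - cos zθ ≤ z² (1 - cos θ)`, strictly for `2 ≤ |z|` and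
`cos θ < 1`, a walk that is not simple has `-φ(θ) < |φ''(0)| (1 - cos θ)` for almost every `θ`;
integrating `(1 - cos rθ) / (1 - cos θ)`, a multiple of the Fejér kernel, gives `m |r| < K(r)` for
`r ≠ 0`, where `m = a / |φ''(0)|`.

Put `k = m y / K(y)`, so that `|k| < 1`. Up to a positive factor and the nonnegative contributions
of `ρ₁(0) = 1` at `x = 0` and `x = y`, the constant `C₁(x, y)` is
`F(x) = (1 + k²) (K(y - x) - K(y)) + (1 - k²) K(x) + 2 k m x`. This `F` vanishes at `0` and `y`, is
harmonic elsewhere and, because `|k| < 1`, tends to infinity. It therefore attains its minimum on a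
finite set that jumps can leave only from `0` or `y`; as the walk is irreducible and has jumps of
size at least `2`, such a set is contained in `{0, y}`.
-/

/-! ### Trigonometric inequalities -/

lemma one_sub_cos_eq_two_mul_sin_sq (x : ℝ) : 1 - cos x = 2 * sin (x / 2) ^ 2 := by
  rw [sin_sq_eq_half_sub, mul_div_cancel₀ x two_ne_zero]
  ring

lemma one_sub_cos_add_le (x y : ℝ) :
    1 - cos (x + y) ≤ 2 * (1 - cos x) + 2 * (1 - cos y) := by
  rw [cos_add]
  nlinarith [sq_nonneg (cos x + cos y - 2), sq_nonneg (sin x - sin y), sin_sq_add_cos_sq x,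
    sin_sq_add_cos_sq y]

lemma one_sub_cos_add_two_mul (n θ : ℝ) :
    1 - cos ((n + 2) * θ) =
      2 * (1 - cos ((n + 1) * θ)) - (1 - cos (n * θ)) + 2 * cos ((n + 1) * θ) * (1 - cos θ) := by
  have h₂ : (n + 2) * θ = (n + 1) * θ + θ := by ring
  have h₀ : n * θ = (n + 1) * θ - θ := by ring
  rw [h₂, h₀, cos_add, cos_sub]
  ring

lemma abs_sin_natCast_add_one_mul_le (n : ℕ) (x : ℝ) :
    |sin ((n + 1 : ℕ) * x)| ≤ |sin (n * x)| * |cos x| + |sin x| := by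
  calc |sin ((n + 1 : ℕ) * x)| = |sin (n * x) * cos x + cos (n * x) * sin x| := by
        rw [Nat.cast_succ, add_one_mul, sin_add]
    _ ≤ |sin (n * x)| * |cos x| + |cos (n * x)| * |sin x| := by
        simpa only [abs_mul] using abs_add_le (sin (n * x) * cos x) (cos (n * x) * sin x)
    _ ≤ |sin (n * x)| * |cos x| + |sin x| := by
        gcongr
        exact mul_le_of_le_one_left (abs_nonneg _) (abs_cos_le_one _)

lemma abs_sin_natCast_mul_le (n : ℕ) (x : ℝ) : |sin (n * x)| ≤ n * |sin x| := by
  induction n with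
  | zero => simp
  | succ n ih =>
    calc |sin ((n + 1 : ℕ) * x)| ≤ |sin (n * x)| * |cos x| + |sin x| :=
          abs_sin_natCast_add_one_mul_le n x
      _ ≤ n * |sin x| * 1 + |sin x| := by gcongr; exact abs_cos_le_one x
      _ = (n + 1 : ℕ) * |sin x| := by push_cast; ring

lemma abs_sin_natCast_mul_lt {n : ℕ} (hn : 2 ≤ n) {x : ℝ} (hx : sin x ≠ 0) :
    |sin (n * x)| < n * |sin x| := by
  obtain ⟨n, rfl⟩ := Nat.exists_eq_add_of_le' hn
  have hcos : |cos x| < 1 := by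
    rw [← sq_lt_one_iff_abs_lt_one, cos_sq']
    linarith [sq_pos_of_ne_zero hx]
  calc |sin ((n + 1 + 1 : ℕ) * x)| ≤ |sin ((n + 1 : ℕ) * x)| * |cos x| + |sin x| :=
        abs_sin_natCast_add_one_mul_le (n + 1) x
    _ ≤ (n + 1 : ℕ) * |sin x| * |cos x| + |sin x| := by
        gcongr; exact abs_sin_natCast_mul_le (n + 1) x
    _ < (n + 1 : ℕ) * |sin x| * 1 + |sin x| := by
        gcongr
    _ = (n + 1 + 1 : ℕ) * |sin x| := by push_cast; ring

lemma cos_intCast_mul (n : ℤ) (θ : ℝ) : cos (n * θ) = cos (n.natAbs * θ) := by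
  obtain ⟨k, rfl | rfl⟩ := n.eq_nat_or_neg <;> simp

lemma one_sub_cos_intCast_mul (n : ℤ) (θ : ℝ) :
    1 - cos (n * θ) = 2 * |sin (n.natAbs * (θ / 2))| ^ 2 := by
  rw [cos_intCast_mul, one_sub_cos_eq_two_mul_sin_sq, sq_abs, mul_div_assoc]

lemma sq_mul_one_sub_cos (n : ℤ) (θ : ℝ) :
    (n : ℝ) ^ 2 * (1 - cos θ) = 2 * (n.natAbs * |sin (θ / 2)|) ^ 2 := by
  rw [one_sub_cos_eq_two_mul_sin_sq, mul_pow, sq_abs, Nat.cast_natAbs, Int.cast_abs, sq_abs]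
  ring

lemma one_sub_cos_intCast_mul_le (n : ℤ) (θ : ℝ) :
    1 - cos (n * θ) ≤ (n : ℝ) ^ 2 * (1 - cos θ) := by
  rw [one_sub_cos_intCast_mul, sq_mul_one_sub_cos]
  gcongr
  exact abs_sin_natCast_mul_le _ _

lemma one_sub_cos_intCast_mul_lt {n : ℤ} (hn : 2 ≤ |n|) {θ : ℝ} (hθ : cos θ < 1) :
    1 - cos (n * θ) < (n : ℝ) ^ 2 * (1 - cos θ) := by
  have hsin : sin (θ / 2) ≠ 0 := fun h => by
    have := one_sub_cos_eq_two_mul_sin_sq θ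
    rw [h] at this
    linarith
  rw [one_sub_cos_intCast_mul, sq_mul_one_sub_cos]
  gcongr
  exact abs_sin_natCast_mul_lt (by rw [Int.abs_eq_natAbs] at hn; lia) hsin

lemma ae_cos_mul_lt_one {c : ℝ} (hc : c ≠ 0) : ∀ᵐ θ : ℝ, cos (c * θ) < 1 := by
  have hcount : (Set.range fun k : ℤ => k * (2 * π) / c).Countable := Set.countable_range _
  filter_upwards [hcount.ae_notMem volume] with θ hθ
  refine (cos_le_one _).lt_of_ne fun h => hθ ?_
  obtain ⟨k, hk⟩ := (cos_eq_one_iff _).1 h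
  exact ⟨k, by simp only [hk, mul_div_cancel_left₀ _ hc]⟩

lemma ae_cos_lt_one : ∀ᵐ θ : ℝ, cos θ < 1 := by
  simpa only [one_mul] using ae_cos_mul_lt_one one_ne_zero

/-! ### Integrals against the Fejér kernel -/

lemma intervalIntegrable_of_measurable_of_abs_le {f : ℝ → ℝ} (hf : Measurable f) {C : ℝ}
    (hC : ∀ x, |f x| ≤ C) (u v : ℝ) : IntervalIntegrable f volume u v :=
  (intervalIntegrable_const (c := C)).mono_fun hf.aestronglyMeasurable
    (.of_forall fun x => (hC x).trans (le_abs_self C))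

lemma intervalIntegral_lt_of_ae_lt {f g : ℝ → ℝ} {u v : ℝ} (huv : u < v)
    (hf : IntervalIntegrable f volume u v) (hg : IntervalIntegrable g volume u v)
    (hlt : ∀ᵐ x, f x < g x) : ∫ x in u..v, f x < ∫ x in u..v, g x := by
  have hlt' : ∀ᵐ x ∂volume.restrict (Set.Ioc u v), f x < g x := ae_restrict_of_ae hlt
  have : (ae (volume.restrict (Set.Ioc u v))).NeBot :=
    ae_neBot.2 <| mt Measure.restrict_eq_zero.1 (by simpa using huv)
  exact intervalIntegral.integral_lt_integral_of_ae_le_of_measure_setOfPred_lt_ne_zero huv.le hf hg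
    (ae_le_of_ae_lt hlt') (frequently_ae_iff.1 hlt'.frequently)

lemma integral_cos_intCast_mul {n : ℤ} (hn : n ≠ 0) : ∫ θ in (-π)..π, cos (n * θ) = 0 := by
  rw [intervalIntegral.integral_comp_mul_left (fun x => cos x) (Int.cast_ne_zero.2 hn),
    integral_cos, mul_neg, sin_neg, sin_int_mul_pi, neg_zero, sub_zero, smul_zero]

lemma intervalIntegrable_one_sub_cos_div (n : ℤ) :
    IntervalIntegrable (fun θ => (1 - cos (n * θ)) / (1 - cos θ)) volume (-π) π := by
  refine intervalIntegrable_of_measurable_of_abs_le (by fun_prop) (C := (n : ℝ) ^ 2)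
    (fun θ => ?_) _ _
  have hθ : 0 ≤ 1 - cos θ := sub_nonneg.2 (cos_le_one _)
  rw [abs_of_nonneg (div_nonneg (sub_nonneg.2 (cos_le_one _)) hθ)]
  exact div_le_of_le_mul₀ hθ (sq_nonneg _) (one_sub_cos_intCast_mul_le n θ)

lemma integral_one_sub_cos_natCast_mul_div (n : ℕ) :
    ∫ θ in (-π)..π, (1 - cos (n * θ)) / (1 - cos θ) = 2 * π * n := by
  have hintegrable (m : ℕ) :
      IntervalIntegrable (fun θ => (1 - cos (m * θ)) / (1 - cos θ)) volume (-π) π :=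
    intervalIntegrable_one_sub_cos_div m
  induction n using Nat.twoStepInduction with
  | zero => simp
  | one =>
    have h : ∀ᵐ θ : ℝ, θ ∈ Set.uIoc (-π) π → (1 - cos ((1 : ℕ) * θ)) / (1 - cos θ) = 1 := by
      filter_upwards [ae_cos_lt_one] with θ hθ _
      rw [Nat.cast_one, one_mul, div_self (sub_pos.2 hθ).ne']
    rw [intervalIntegral.integral_congr_ae h, intervalIntegral.integral_const, smul_eq_mul]
    push_cast
    ring
  | more n ih₀ ih₁ =>
    have h : ∀ᵐ θ : ℝ, θ ∈ Set.uIoc (-π) π → (1 - cos ((n + 2 : ℕ) * θ)) / (1 - cos θ) =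
        2 * ((1 - cos ((n + 1 : ℕ) * θ)) / (1 - cos θ)) - (1 - cos (n * θ)) / (1 - cos θ)
          + 2 * cos ((n + 1 : ℤ) * θ) := by
      filter_upwards [ae_cos_lt_one] with θ hθ _
      have := (sub_pos.2 hθ).ne'
      push_cast
      rw [one_sub_cos_add_two_mul]
      field_simp
    rw [intervalIntegral.integral_congr_ae h,
      intervalIntegral.integral_add (((hintegrable _).const_mul 2).sub (hintegrable _))
        (Continuous.intervalIntegrable (by fun_prop) _ _),
      intervalIntegral.integral_sub ((hintegrable _).const_mul 2) (hintegrable _),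
      intervalIntegral.integral_const_mul, intervalIntegral.integral_const_mul, ih₀, ih₁]
    have hcos := integral_cos_intCast_mul (n := n + 1) (by lia)
    push_cast at hcos ⊢
    rw [hcos]
    ring

lemma integral_one_sub_cos_intCast_mul_div (n : ℤ) :
    ∫ θ in (-π)..π, (1 - cos (n * θ)) / (1 - cos θ) = 2 * π * |(n : ℝ)| := by
  simp_rw [cos_intCast_mul n]
  rw [integral_one_sub_cos_natCast_mul_div, Nat.cast_natAbs, Int.cast_abs]

/-! ### Harmonic functions for a jump rate -/

section Harmonic

variable {G : Type*} {a F F₁ F₂ : G → ℝ} {x : G}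

/-- Harmonicity of `F` at `x` for the operator `(AF)(x) = ∑_z a(z) F(x + z)`, which is the generator
of the walk with jump rates `a` when these sum to zero. The series is required to converge
unconditionally. -/
def IsHarmonicAt [Add G] (a F : G → ℝ) (x : G) : Prop :=
  HasSum (fun z => a z * F (x + z)) 0

namespace IsHarmonicAt

lemma const [Add G] (hsum : HasSum a 0) (c : ℝ) (x : G) : IsHarmonicAt a (fun _ => c) x := by
  simpa only [IsHarmonicAt, zero_mul] using hsum.mul_right c

lemma add [Add G] (h₁ : IsHarmonicAt a F₁ x) (h₂ : IsHarmonicAt a F₂ x) :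
    IsHarmonicAt a (fun u => F₁ u + F₂ u) x := by
  simpa only [IsHarmonicAt, mul_add, add_zero] using HasSum.add h₁ h₂

lemma const_mul [Add G] (h : IsHarmonicAt a F x) (c : ℝ) :
    IsHarmonicAt a (fun u => c * F u) x := by
  simpa only [IsHarmonicAt, mul_left_comm, mul_zero] using HasSum.mul_left c h

lemma comp_const_sub [AddCommGroup G] (hsymm : ∀ z, a (-z) = a z) {y : G}
    (h : IsHarmonicAt a F (y - x)) : IsHarmonicAt a (fun u => F (y - u)) x := by
  refine ((Equiv.neg G).hasSum_iff.2 h).congr_fun fun z => ?_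
  change a z * F (y - (x + z)) = a (-z) * F (y - x + -z)
  rw [hsymm, sub_add_eq_sub_sub, sub_eq_add_neg (y - x)]

lemma apply_add_eq_of_forall_le [AddZeroClass G] (hpos : ∀ z ≠ 0, 0 ≤ a z) (hsum : HasSum a 0)
    (h : IsHarmonicAt a F x) (hmin : ∀ u, F x ≤ F u) {z : G} (hz : 0 < a z) :
    F (x + z) = F x := by
  have hdiff : HasSum (fun w => a w * (F (x + w) - F x)) 0 := by
    simpa only [mul_sub, zero_mul, sub_zero] using HasSum.sub h (hsum.mul_right (F x))
  have hnonneg (w : G) : 0 ≤ a w * (F (x + w) - F x) := by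
    rcases eq_or_ne w 0 with rfl | hw
    · simp
    · exact mul_nonneg (hpos w hw) (sub_nonneg.2 (hmin _))
  have hzero := congrFun ((hasSum_zero_iff_of_nonneg hnonneg).1 hdiff) z
  exact sub_eq_zero.1 ((mul_eq_zero.1 hzero).resolve_left hz.ne')

end IsHarmonicAt

end Harmonic

lemma hasSum_zero_of_odd {G : Type*} [InvolutiveNeg G] {f : G → ℝ} (hf : Summable f)
    (hodd : f.Odd) : HasSum f 0 := by
  have h : ∑' z, f z = -∑' z, f z := by
    rw [← tsum_neg, ← (Equiv.neg G).tsum_eq]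
    exact tsum_congr hodd
  exact (self_eq_neg.1 h) ▸ hf.hasSum

lemma dvd_one_of_closure_eq_top {S : Set ℤ} {d : ℤ} (hdvd : ∀ z ∈ S, d ∣ z)
    (hgen : AddSubgroup.closure S = ⊤) : d ∣ 1 := by
  have hle : AddSubgroup.closure S ≤ AddSubgroup.zmultiples d :=
    (AddSubgroup.closure_le _).2 fun z hz => Int.mem_zmultiples_iff.2 (hdvd z hz)
  exact Int.mem_zmultiples_iff.1 (hle (hgen ▸ AddSubgroup.mem_top 1))

lemma eq_sub_of_sub_mem {Z : Set ℤ} {n w z : ℤ} (hn : IsLeast Z n)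
    (hw : IsLeast {u ∈ Z | n < u} w) (hz : 0 < z) (hwz : w - z ∈ Z) : z = w - n := by
  have hle : n ≤ w - z := hn.2 hwz
  rcases hle.eq_or_lt with h | h
  · lia
  · have : w ≤ w - z := hw.2 ⟨hwz, h⟩
    lia

lemma subset_pair_of_add_mem {S Z : Set ℤ} (hneg : ∀ z ∈ S, -z ∈ S)
    (hgen : AddSubgroup.closure S = ⊤) (hjump : ∃ s ∈ S, 2 ≤ |s|) (hfin : Z.Finite) {p q : ℤ}
    (hadd : ∀ u ∈ Z, u ≠ p → u ≠ q → ∀ s ∈ S, u + s ∈ Z) : Z ⊆ {p, q} := by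
  intro x hx
  by_contra hxpq
  rw [Set.mem_insert_iff, Set.mem_singleton_iff, not_or] at hxpq
  obtain ⟨s, hs, hs2⟩ := hjump
  have habs : ∀ z ∈ S, |z| ∈ S := fun z hz => abs_by_cases (· ∈ S) hz (hneg z hz)
  have hsub (u : ℤ) (hu : u ∈ Z) (hup : u ≠ p) (huq : u ≠ q) (z : ℤ) (hz : z ∈ S) : u - |z| ∈ Z :=
    hadd u hu hup huq _ (hneg _ (habs z hz))
  obtain ⟨M, hM, hmax⟩ : ∃ M, IsGreatest Z M := Set.exists_max_image Z id hfin ⟨x, hx⟩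
  obtain ⟨N, hN, hmin⟩ : ∃ N, IsLeast Z N := Set.exists_min_image Z id hfin ⟨x, hx⟩
  have hxM : x ≤ M := hmax hx
  have hNx : N ≤ x := hmin hx
  have hMpq : M = p ∨ M = q := by
    by_contra! h
    have : M + |s| ≤ M := hmax (hadd M hM h.1 h.2 _ (habs s hs))
    lia
  have hNpq : N = p ∨ N = q := by
    by_contra! h
    have : N ≤ N - |s| := hmin (hsub N hN h.1 h.2 s hs)
    lia
  obtain ⟨w, hw⟩ : ∃ w, IsLeast {u ∈ Z | N < u} w :=
    Set.exists_min_image _ id (hfin.subset fun u hu => hu.1) ⟨x, hx, by lia⟩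
  have hwx : w ≤ x := hw.2 ⟨hx, by lia⟩
  have hNw : N < w := hw.1.2
  -- A downward jump from `w` stays in `Z`, so it can only land on `N`.
  have hunique : ∀ z ∈ S, z ≠ 0 → |z| = w - N := fun z hz hz₀ =>
    eq_sub_of_sub_mem ⟨hN, hmin⟩ hw (abs_pos.2 hz₀) (hsub w hw.1.1 (by lia) (by lia) z hz)
  have hdvd : ∀ z ∈ S, |s| ∣ z := by
    intro z hz
    rcases eq_or_ne z 0 with rfl | hz₀
    · exact dvd_zero _
    · rw [← dvd_abs, hunique z hz hz₀, hunique s hs (by rintro rfl; simp at hs2)]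
  have : |s| ≤ 1 := Int.le_of_dvd one_pos (dvd_one_of_closure_eq_top hdvd hgen)
  lia

section Walk

variable {a : ℤ → ℝ}

lemma pos_of_isHarmonicAt_of_tendsto_atTop {F : ℤ → ℝ} {p q : ℤ} (hpos : ∀ z ≠ 0, 0 ≤ a z)
    (hsymm : ∀ z, a (-z) = a z) (hsum : HasSum a 0)
    (hirr : AddSubgroup.closure {z | 0 < a z} = ⊤) (hns : ∃ z, 2 ≤ |z| ∧ 0 < a z)
    (hF : Tendsto F cofinite atTop) (hp : F p = 0) (hq : F q = 0)
    (hharm : ∀ x, x ≠ p → x ≠ q → IsHarmonicAt a F x) {x : ℤ} (hxp : x ≠ p) (hxq : x ≠ q) :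
    0 < F x := by
  obtain ⟨m, hm⟩ := hF.exists_forall_le
  have hfin : {u | F u = F m}.Finite :=
    (hF.eventually (eventually_gt_atTop (F m))).subset fun u hu h => h.ne' hu
  have hadd : ∀ u ∈ {u | F u = F m}, u ≠ p → u ≠ q → ∀ z ∈ {z | 0 < a z},
      u + z ∈ {u | F u = F m} := by
    intro u (hu : F u = F m) hup huq z hz
    exact ((hharm u hup huq).apply_add_eq_of_forall_le hpos hsum (hu ▸ hm) hz).trans hu
  have hsub : {u | F u = F m} ⊆ {p, q} := subset_pair_of_add_mem
    (fun z (hz : 0 < a z) => hz.trans_eq (hsymm z).symm) hirr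
    (hns.imp fun z hz => ⟨hz.2, hz.1⟩) hfin hadd
  have hFm : F m = 0 := by
    rcases hsub (rfl : F m = F m) with rfl | rfl
    exacts [hp, hq]
  refine lt_of_le_of_ne (hFm ▸ hm x) fun h => ?_
  rcases hsub (h.symm.trans hFm.symm : F x = F m) with rfl | rfl
  exacts [hxp rfl, hxq rfl]

/-! ### The symbol -/

lemma norm_mul_cos_le (z : ℤ) (θ : ℝ) : ‖a z * cos (z * θ)‖ ≤ |a z| := by
  rw [norm_mul, Real.norm_eq_abs, Real.norm_eq_abs]
  exact mul_le_of_le_one_right (abs_nonneg _) (abs_cos_le_one _)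

lemma hasSum_mul_cos (ha : Summable a) (θ : ℝ) :
    HasSum (fun z : ℤ => a z * cos (z * θ)) (phi1 a θ) :=
  (Summable.of_norm_bounded ha.abs fun z => norm_mul_cos_le z θ).hasSum

lemma hasSum_mul_sin_zero (hsymm : ∀ z, a (-z) = a z) (ha : Summable a) (θ : ℝ) :
    HasSum (fun z : ℤ => a z * sin (z * θ)) 0 := by
  refine hasSum_zero_of_odd (Summable.of_norm_bounded ha.abs fun z => ?_) fun z => by simp [hsymm]
  rw [norm_mul, Real.norm_eq_abs, Real.norm_eq_abs]
  exact mul_le_of_le_one_right (abs_nonneg _) (abs_sin_le_one _)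

lemma measurable_phi1 (ha : Summable a) : Measurable (phi1 a) :=
  (continuous_tsum (fun z => by fun_prop) ha.abs norm_mul_cos_le).measurable

lemma hasSum_mul_one_sub_cos (hsum : HasSum a 0) (θ : ℝ) :
    HasSum (fun z : ℤ => a z * (1 - cos (z * θ))) (-phi1 a θ) := by
  simpa only [mul_sub, mul_one, zero_sub] using hsum.sub (hasSum_mul_cos hsum.summable θ)

lemma mul_one_sub_cos_nonneg (hpos : ∀ z ≠ 0, 0 ≤ a z) (z : ℤ) (θ : ℝ) :
    0 ≤ a z * (1 - cos (z * θ)) := by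
  rcases eq_or_ne z 0 with rfl | hz
  · simp
  · exact mul_nonneg (hpos z hz) (sub_nonneg.2 (cos_le_one _))

lemma mul_one_sub_cos_le_neg_phi1 (hpos : ∀ z ≠ 0, 0 ≤ a z) (hsum : HasSum a 0) (z : ℤ) (θ : ℝ) :
    a z * (1 - cos (z * θ)) ≤ -phi1 a θ :=
  le_hasSum (hasSum_mul_one_sub_cos hsum θ) z fun w _ => mul_one_sub_cos_nonneg hpos w θ

lemma phi1_nonpos (hpos : ∀ z ≠ 0, 0 ≤ a z) (hsum : HasSum a 0) (θ : ℝ) : phi1 a θ ≤ 0 :=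
  neg_nonneg.1 <| (hasSum_mul_one_sub_cos hsum θ).nonneg fun z => mul_one_sub_cos_nonneg hpos z θ

lemma exists_one_sub_cos_le_mul_neg_phi1 (hpos : ∀ z ≠ 0, 0 ≤ a z) (hsum : HasSum a 0)
    (hirr : AddSubgroup.closure {z | 0 < a z} = ⊤) :
    ∃ C, 0 ≤ C ∧ ∀ θ, 1 - cos θ ≤ C * -phi1 a θ := by
  -- The integers `r` for which `1 - cos (rθ)` is bounded by a multiple of `-φ(θ)` form a subgroup.
  suffices h : ∀ r ∈ AddSubgroup.closure {z | 0 < a z},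
      ∃ C, 0 ≤ C ∧ ∀ θ, 1 - cos (r * θ) ≤ C * -phi1 a θ by
    simpa only [Int.cast_one, one_mul] using h 1 (hirr ▸ AddSubgroup.mem_top 1)
  intro r hr
  induction hr using AddSubgroup.closure_induction with
  | mem z hz =>
    replace hz : 0 < a z := hz
    refine ⟨(a z)⁻¹, by positivity, fun θ => ?_⟩
    rw [← div_eq_inv_mul, le_div_iff₀' hz]
    exact mul_one_sub_cos_le_neg_phi1 hpos hsum z θ
  | zero => exact ⟨0, le_rfl, by simp⟩
  | add u v _ _ hu hv =>
    obtain ⟨C, hC, hu⟩ := hu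
    obtain ⟨D, hD, hv⟩ := hv
    refine ⟨2 * C + 2 * D, by positivity, fun θ => ?_⟩
    rw [Int.cast_add, add_mul]
    linarith [one_sub_cos_add_le (u * θ) (v * θ), hu θ, hv θ]
  | neg u _ hu => simpa using hu

lemma phi1_neg (hpos : ∀ z ≠ 0, 0 ≤ a z) (hsum : HasSum a 0)
    (hirr : AddSubgroup.closure {z | 0 < a z} = ⊤) {θ : ℝ} (hθ : cos θ < 1) : phi1 a θ < 0 := by
  obtain ⟨C, -, hC⟩ := exists_one_sub_cos_le_mul_neg_phi1 hpos hsum hirr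
  refine (phi1_nonpos hpos hsum θ).lt_of_ne fun h => ?_
  have := hC θ
  rw [h, neg_zero, mul_zero] at this
  linarith

lemma hasSum_mul_sq (hvar : Summable fun z : ℤ => (z : ℝ) ^ 2 * a z) :
    HasSum (fun z : ℤ => a z * (z : ℝ) ^ 2) (-phi1'' a) := by
  rw [phi1'', neg_neg]
  simp_rw [mul_comm] at hvar
  exact hvar.hasSum

lemma phi1''_neg (hpos : ∀ z ≠ 0, 0 ≤ a z) (hvar : Summable fun z : ℤ => (z : ℝ) ^ 2 * a z)
    (hjump : ∃ z ≠ 0, 0 < a z) : phi1'' a < 0 := by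
  obtain ⟨w, hw, haw⟩ := hjump
  refine neg_pos.1 (hasSum_lt (i := w) (fun z => ?_) ?_ hasSum_zero (hasSum_mul_sq hvar))
  · rcases eq_or_ne z 0 with rfl | hz
    · simp
    · exact mul_nonneg (hpos z hz) (sq_nonneg _)
  · exact mul_pos haw (sq_pos_of_ne_zero (Int.cast_ne_zero.2 hw))

lemma phi1''_mul_one_sub_cos_lt_phi1 (hpos : ∀ z ≠ 0, 0 ≤ a z) (hsum : HasSum a 0)
    (hvar : Summable fun z : ℤ => (z : ℝ) ^ 2 * a z) (hns : ∃ z, 2 ≤ |z| ∧ 0 < a z) {θ : ℝ}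
    (hθ : cos θ < 1) : phi1'' a * (1 - cos θ) < phi1 a θ := by
  obtain ⟨w, hw, haw⟩ := hns
  have hlt : -phi1 a θ < -phi1'' a * (1 - cos θ) := by
    refine hasSum_lt (i := w) (fun z => ?_) ?_ (hasSum_mul_one_sub_cos hsum θ)
      ((hasSum_mul_sq hvar).mul_right _)
    · rcases eq_or_ne z 0 with rfl | hz
      · simp
      · simpa only [mul_assoc] using
          mul_le_mul_of_nonneg_left (one_sub_cos_intCast_mul_le z θ) (hpos z hz)
    · simpa only [mul_assoc] using
        mul_lt_mul_of_pos_left (one_sub_cos_intCast_mul_lt hw hθ) haw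
  linarith

lemma summable_mul_intCast (hpos : ∀ z ≠ 0, 0 ≤ a z)
    (hvar : Summable fun z : ℤ => (z : ℝ) ^ 2 * a z) : Summable fun z : ℤ => a z * (z : ℝ) := by
  refine Summable.of_norm_bounded hvar fun z => ?_
  rcases eq_or_ne z 0 with rfl | hz
  · simp
  · have hz1 : 1 ≤ |(z : ℝ)| := by exact_mod_cast Int.one_le_abs hz
    rw [norm_mul, Real.norm_of_nonneg (hpos z hz), Real.norm_eq_abs, mul_comm, ← sq_abs]
    exact mul_le_mul_of_nonneg_right (le_self_pow₀ hz1 two_ne_zero) (hpos z hz)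

lemma isHarmonicAt_intCast (hpos : ∀ z ≠ 0, 0 ≤ a z) (hsymm : ∀ z, a (-z) = a z)
    (hsum : HasSum a 0) (hvar : Summable fun z : ℤ => (z : ℝ) ^ 2 * a z) (x : ℤ) :
    IsHarmonicAt a (fun u => (u : ℝ)) x := by
  have hodd : HasSum (fun z : ℤ => a z * (z : ℝ)) 0 :=
    hasSum_zero_of_odd (summable_mul_intCast hpos hvar) fun z => by simp [hsymm]
  simpa only [IsHarmonicAt, Int.cast_add, mul_add, zero_mul, add_zero] using
    (hsum.mul_right (x : ℝ)).add hodd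

/-! ### The potential kernel -/

/-- The potential kernel `K(r) = (a / 2π) ∫_{-π}^{π} (cos(rθ) - 1) / φ(θ) dθ` of the walk. Unlike
`rho1`, it takes the value `0` at `r = 0`. -/
noncomputable def potentialKernel (a : ℤ → ℝ) (r : ℤ) : ℝ :=
  (-(a 0) / (2 * π)) * ∫ θ in (-π)..π, (cos (r * θ) - 1) / phi1 a θ

/-- The number `a / |φ''(0)|`, which is the slope of the potential kernel at infinity. -/
noncomputable def kernelSlope (a : ℤ → ℝ) : ℝ := a 0 / phi1'' a

lemma potentialKernel_zero (a : ℤ → ℝ) : potentialKernel a 0 = 0 := by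
  simp [potentialKernel]

lemma rho1_eq_potentialKernel_add (a : ℤ → ℝ) (r : ℤ) :
    rho1 a r = potentialKernel a r + if r = 0 then 1 else 0 := by
  rcases eq_or_ne r 0 with rfl | hr
  · simp [rho1, potentialKernel_zero]
  · simp only [rho1, potentialKernel, if_neg hr, add_zero]

lemma rho1_of_ne_zero (a : ℤ → ℝ) {r : ℤ} (hr : r ≠ 0) : rho1 a r = potentialKernel a r :=
  if_neg hr

lemma abs_cos_sub_one_div_phi1_le (hpos : ∀ z ≠ 0, 0 ≤ a z) (hsum : HasSum a 0) {C : ℝ}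
    (hC₀ : 0 ≤ C) (hC : ∀ θ, 1 - cos θ ≤ C * -phi1 a θ) (r : ℤ) (θ : ℝ) :
    |(cos (r * θ) - 1) / phi1 a θ| ≤ C * (r : ℝ) ^ 2 := by
  have hphi : 0 ≤ -phi1 a θ := neg_nonneg.2 (phi1_nonpos hpos hsum θ)
  rw [← neg_div_neg_eq, neg_sub, abs_of_nonneg (div_nonneg (sub_nonneg.2 (cos_le_one _)) hphi)]
  refine div_le_of_le_mul₀ hphi (by positivity) ?_
  calc 1 - cos (r * θ) ≤ (r : ℝ) ^ 2 * (1 - cos θ) := one_sub_cos_intCast_mul_le r θ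
    _ ≤ (r : ℝ) ^ 2 * (C * -phi1 a θ) := by gcongr; exact hC θ
    _ = C * (r : ℝ) ^ 2 * -phi1 a θ := by ring

lemma intervalIntegrable_cos_sub_one_div_phi1 (hpos : ∀ z ≠ 0, 0 ≤ a z) (hsum : HasSum a 0)
    (hirr : AddSubgroup.closure {z | 0 < a z} = ⊤) (r : ℤ) :
    IntervalIntegrable (fun θ => (cos (r * θ) - 1) / phi1 a θ) volume (-π) π := by
  obtain ⟨C, hC₀, hC⟩ := exists_one_sub_cos_le_mul_neg_phi1 hpos hsum hirr
  have := measurable_phi1 hsum.summable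
  exact intervalIntegrable_of_measurable_of_abs_le (by fun_prop)
    (abs_cos_sub_one_div_phi1_le hpos hsum hC₀ hC r) _ _

lemma hasSum_mul_cos_sub_one_div_phi1 (hsymm : ∀ z, a (-z) = a z) (hsum : HasSum a 0) (x : ℤ)
    {θ : ℝ} (hθ : phi1 a θ ≠ 0) :
    HasSum (fun z : ℤ => a z * ((cos ((x + z : ℤ) * θ) - 1) / phi1 a θ)) (cos (x * θ)) := by
  have h := ((((hasSum_mul_cos hsum.summable θ).mul_left (cos (x * θ))).sub
    ((hasSum_mul_sin_zero hsymm hsum.summable θ).mul_left (sin (x * θ)))).sub hsum).div_const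
      (phi1 a θ)
  rw [mul_zero, sub_zero, sub_zero, mul_div_cancel_right₀ _ hθ] at h
  refine h.congr_fun fun z => ?_
  rw [Int.cast_add, add_mul, cos_add]
  ring

lemma summable_abs_mul_add_sq (hpos : ∀ z ≠ 0, 0 ≤ a z) (ha : Summable a)
    (hvar : Summable fun z : ℤ => (z : ℝ) ^ 2 * a z) (x : ℤ) :
    Summable fun z : ℤ => |a z| * ((x + z : ℤ) : ℝ) ^ 2 := by
  have h := (((ha.mul_left ((x : ℝ) ^ 2)).add
    ((summable_mul_intCast hpos hvar).mul_left (2 * (x : ℝ)))).add hvar).abs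
  refine h.congr fun z => ?_
  rw [← abs_sq ((x + z : ℤ) : ℝ), ← abs_mul, Int.cast_add]
  ring_nf

lemma isHarmonicAt_potentialKernel (hpos : ∀ z ≠ 0, 0 ≤ a z) (hsymm : ∀ z, a (-z) = a z)
    (hsum : HasSum a 0) (hvar : Summable fun z : ℤ => (z : ℝ) ^ 2 * a z)
    (hirr : AddSubgroup.closure {z | 0 < a z} = ⊤) {x : ℤ} (hx : x ≠ 0) :
    IsHarmonicAt a (potentialKernel a) x := by
  obtain ⟨C, hC₀, hC⟩ := exists_one_sub_cos_le_mul_neg_phi1 hpos hsum hirr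
  have hmeas := measurable_phi1 hsum.summable
  have hintegral : HasSum
      (fun z : ℤ => ∫ θ in (-π)..π, a z * ((cos ((x + z : ℤ) * θ) - 1) / phi1 a θ))
      (∫ θ in (-π)..π, cos (x * θ)) := by
    refine intervalIntegral.hasSum_integral_of_dominated_convergence
      (fun z _ => C * (|a z| * ((x + z : ℤ) : ℝ) ^ 2))
      (fun z => Measurable.aestronglyMeasurable (by fun_prop))
      (fun z => .of_forall fun θ _ => ?_)
      (.of_forall fun θ _ => (summable_abs_mul_add_sq hpos hsum.summable hvar x).mul_left C)
      intervalIntegrable_const ?_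
    · rw [norm_mul, Real.norm_eq_abs, Real.norm_eq_abs, mul_left_comm]
      gcongr
      exact abs_cos_sub_one_div_phi1_le hpos hsum hC₀ hC _ θ
    · filter_upwards [ae_cos_lt_one] with θ hθ _
      exact hasSum_mul_cos_sub_one_div_phi1 hsymm hsum x (phi1_neg hpos hsum hirr hθ).ne
  rw [integral_cos_intCast_mul hx] at hintegral
  have h := hintegral.mul_left (-(a 0) / (2 * π))
  rw [mul_zero] at h
  refine h.congr_fun fun z => ?_
  rw [potentialKernel, intervalIntegral.integral_const_mul]
  ring

lemma kernelSlope_mul_abs_lt_potentialKernel (hpos : ∀ z ≠ 0, 0 ≤ a z) (hneg : a 0 < 0)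
    (hsum : HasSum a 0) (hvar : Summable fun z : ℤ => (z : ℝ) ^ 2 * a z)
    (hirr : AddSubgroup.closure {z | 0 < a z} = ⊤) (hns : ∃ z, 2 ≤ |z| ∧ 0 < a z)
    {r : ℤ} (hr : r ≠ 0) :
    kernelSlope a * |(r : ℝ)| < potentialKernel a r := by
  have hlt : ∀ᵐ θ : ℝ, (-phi1'' a)⁻¹ * ((1 - cos (r * θ)) / (1 - cos θ)) <
      (cos (r * θ) - 1) / phi1 a θ := by
    filter_upwards [ae_cos_lt_one, ae_cos_mul_lt_one (Int.cast_ne_zero.2 hr)] with θ hθ hrθ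
    calc (-phi1'' a)⁻¹ * ((1 - cos (r * θ)) / (1 - cos θ))
        = (1 - cos (r * θ)) / (-(phi1'' a * (1 - cos θ))) := by
          rw [inv_mul_eq_div, div_div, mul_comm (1 - cos θ), neg_mul]
      _ < (1 - cos (r * θ)) / -phi1 a θ :=
          div_lt_div_of_pos_left (sub_pos.2 hrθ) (neg_pos.2 (phi1_neg hpos hsum hirr hθ))
            (neg_lt_neg (phi1''_mul_one_sub_cos_lt_phi1 hpos hsum hvar hns hθ))
      _ = (cos (r * θ) - 1) / phi1 a θ := by rw [← neg_div_neg_eq, neg_sub, neg_neg]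
  have hintegral := intervalIntegral_lt_of_ae_lt (neg_lt_self pi_pos)
    ((intervalIntegrable_one_sub_cos_div r).const_mul _)
    (intervalIntegrable_cos_sub_one_div_phi1 hpos hsum hirr r) hlt
  rw [intervalIntegral.integral_const_mul, integral_one_sub_cos_intCast_mul_div] at hintegral
  calc kernelSlope a * |(r : ℝ)|
      = -(a 0) / (2 * π) * ((-phi1'' a)⁻¹ * (2 * π * |(r : ℝ)|)) := by
        rw [kernelSlope]
        field_simp
    _ < potentialKernel a r :=
        mul_lt_mul_of_pos_left hintegral (div_pos (neg_pos.2 hneg) two_pi_pos)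

end Walk

/-! ### The two-point potential -/

/-- The combination of a kernel `K`, its reflection about `y / 2` and a linear function of slope
`2 k m`, as a function of `x`. It is normalised so that it vanishes at `0` and `y` when `K 0 = 0`
and `k * K y = m * y`. -/
noncomputable def twoPointPotential (K : ℤ → ℝ) (m k : ℝ) (y x : ℤ) : ℝ :=
  (1 + k ^ 2) * (K (y - x) - K y) + (1 - k ^ 2) * K x + 2 * k * m * x

section TwoPoint

variable {K : ℤ → ℝ} {m k : ℝ} {y : ℤ}

lemma twoPointPotential_zero_right (hK₀ : K 0 = 0) : twoPointPotential K m k y 0 = 0 := by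
  simp [twoPointPotential, hK₀]

lemma twoPointPotential_self (hK₀ : K 0 = 0) (hk : k * K y = m * y) :
    twoPointPotential K m k y y = 0 := by
  rw [twoPointPotential, sub_self, hK₀]
  linear_combination (-2 * k) * hk

lemma tendsto_twoPointPotential_atTop (hK : ∀ r : ℤ, m * |(r : ℝ)| ≤ K r) (hm : 0 < m)
    (hk : |k| < 1) : Tendsto (twoPointPotential K m k y) cofinite atTop := by
  have hk₂ : 0 ≤ 1 - k ^ 2 := sub_nonneg.2 ((sq_lt_one_iff_abs_lt_one k).2 hk).le
  have hlow (x : ℤ) : 2 * m * (1 - |k|) * |(x : ℝ)| + -((1 + k ^ 2) * (m * |(y : ℝ)| + K y)) ≤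
      twoPointPotential K m k y x := by
    have hreflected : m * (|(x : ℝ)| - |(y : ℝ)|) ≤ K (y - x) := by
      refine le_trans (mul_le_mul_of_nonneg_left ?_ hm.le) (hK (y - x))
      rw [Int.cast_sub, abs_sub_comm]
      exact abs_sub_abs_le_abs_sub _ _
    have hlinear : -(|k| * |(x : ℝ)|) ≤ k * x := abs_mul k x ▸ neg_abs_le _
    calc 2 * m * (1 - |k|) * |(x : ℝ)| + -((1 + k ^ 2) * (m * |(y : ℝ)| + K y))
        = (1 + k ^ 2) * (m * (|(x : ℝ)| - |(y : ℝ)|) - K y) + (1 - k ^ 2) * (m * |(x : ℝ)|)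
            + 2 * m * -(|k| * |(x : ℝ)|) := by ring
      _ ≤ (1 + k ^ 2) * (K (y - x) - K y) + (1 - k ^ 2) * K x + 2 * m * (k * x) := by
          gcongr
          exact hK x
      _ = twoPointPotential K m k y x := by rw [twoPointPotential]; ring
  refine tendsto_atTop_mono hlow (tendsto_atTop_add_const_right _ _ ?_)
  refine Tendsto.const_mul_atTop (mul_pos (by positivity) (sub_pos.2 hk)) ?_
  exact tendsto_norm_cocompact_atTop.comp Int.tendsto_coe_cofinite

lemma isHarmonicAt_twoPointPotential {a : ℤ → ℝ} (hpos : ∀ z ≠ 0, 0 ≤ a z)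
    (hsymm : ∀ z, a (-z) = a z) (hsum : HasSum a 0)
    (hvar : Summable fun z : ℤ => (z : ℝ) ^ 2 * a z) {x : ℤ} (hKx : IsHarmonicAt a K x)
    (hKyx : IsHarmonicAt a K (y - x)) : IsHarmonicAt a (twoPointPotential K m k y) x :=
  ((((hKyx.comp_const_sub hsymm).add (.const hsum (-K y) x)).const_mul (1 + k ^ 2)).add
    (hKx.const_mul (1 - k ^ 2))).add
      ((isHarmonicAt_intCast hpos hsymm hsum hvar x).const_mul (2 * k * m))

lemma twoPointPotential_potentialKernel_pos {a : ℤ → ℝ} (hpos : ∀ z ≠ 0, 0 ≤ a z)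
    (hsymm : ∀ z, a (-z) = a z) (hsum : HasSum a 0)
    (hvar : Summable fun z : ℤ => (z : ℝ) ^ 2 * a z)
    (hirr : AddSubgroup.closure {z | 0 < a z} = ⊤) (hns : ∃ z, 2 ≤ |z| ∧ 0 < a z) (hm : 0 < m)
    (hK : ∀ r : ℤ, m * |(r : ℝ)| ≤ potentialKernel a r) (hk : |k| < 1)
    (hky : k * potentialKernel a y = m * y) {x : ℤ} (hx : x ≠ 0) (hxy : x ≠ y) :
    0 < twoPointPotential (potentialKernel a) m k y x := by
  have hharm {u : ℤ} (hu : u ≠ 0) : IsHarmonicAt a (potentialKernel a) u :=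
    isHarmonicAt_potentialKernel hpos hsymm hsum hvar hirr hu
  exact pos_of_isHarmonicAt_of_tendsto_atTop hpos hsymm hsum hirr hns
    (tendsto_twoPointPotential_atTop hK hm hk)
    (twoPointPotential_zero_right (potentialKernel_zero a))
    (twoPointPotential_self (potentialKernel_zero a) hky)
    (fun u hu huy => isHarmonicAt_twoPointPotential hpos hsymm hsum hvar (hharm hu)
      (hharm (sub_ne_zero.2 huy.symm))) hx hxy

lemma twoPointPotential_rho1 (a : ℤ → ℝ) (hy : y ≠ 0) (x : ℤ) :
    twoPointPotential (rho1 a) m k y x = twoPointPotential (potentialKernel a) m k y x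
      + (1 + k ^ 2) * (if x = y then 1 else 0) + (1 - k ^ 2) * (if x = 0 then 1 else 0) := by
  have hxy : y - x = 0 ↔ x = y := by rw [sub_eq_zero, eq_comm]
  simp only [twoPointPotential, rho1_eq_potentialKernel_add, if_neg hy, hxy]
  ring

lemma twoPointPotential_rho1_pos {a : ℤ → ℝ} (hpos : ∀ z ≠ 0, 0 ≤ a z)
    (hsymm : ∀ z, a (-z) = a z) (hsum : HasSum a 0)
    (hvar : Summable fun z : ℤ => (z : ℝ) ^ 2 * a z)
    (hirr : AddSubgroup.closure {z | 0 < a z} = ⊤) (hns : ∃ z, 2 ≤ |z| ∧ 0 < a z) (hm : 0 < m)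
    (hK : ∀ r : ℤ, m * |(r : ℝ)| ≤ potentialKernel a r) (hk : |k| < 1) (hy : y ≠ 0)
    (hky : k * potentialKernel a y = m * y) (x : ℤ) :
    0 < twoPointPotential (rho1 a) m k y x := by
  have hk₂ : 0 < 1 - k ^ 2 := sub_pos.2 ((sq_lt_one_iff_abs_lt_one k).2 hk)
  rw [twoPointPotential_rho1 a hy]
  rcases eq_or_ne x 0 with rfl | hx
  · simpa only [twoPointPotential_zero_right (potentialKernel_zero a), if_neg hy.symm, if_true,
      mul_zero, mul_one, zero_add] using hk₂
  rcases eq_or_ne x y with rfl | hxy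
  · simp only [twoPointPotential_self (potentialKernel_zero a) hky, if_true, if_neg hy]
    positivity
  · simpa only [if_neg hx, if_neg hxy, mul_zero, add_zero] using
      twoPointPotential_potentialKernel_pos hpos hsymm hsum hvar hirr hns hm hK hk hky hx hxy

end TwoPoint

section Constant

variable {a : ℤ → ℝ}

lemma gam1_pos (hphi : phi1'' a < 0) : 0 < gam1 a :=
  one_div_pos.2 (sqrt_pos.2 (mul_pos two_pi_pos (abs_pos.2 hphi.ne)))

lemma kernelSlope_eq_mul_gam1_sq (hphi : phi1'' a < 0) :
    kernelSlope a = -(a 0) * (2 * π) * gam1 a ^ 2 := by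
  have hphi' := hphi.ne
  rw [kernelSlope, gam1, abs_of_neg hphi, div_pow, sq_sqrt (by nlinarith [two_pi_pos])]
  field_simp

lemma C1Const_eq_twoPointPotential_div (hneg : a 0 < 0) (hphi : phi1'' a < 0) (x : ℤ) {y : ℤ}
    (hy : rho1 a y ≠ 0) :
    C1Const a x y =
      twoPointPotential (rho1 a) (kernelSlope a) (kernelSlope a * y / rho1 a y) y x /
        (4 * (-(a 0)) * π * gam1 a) := by
  have ha := hneg.ne
  have hg := (gam1_pos hphi).ne'
  rw [C1Const, twoPointPotential, kernelSlope_eq_mul_gam1_sq hphi]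
  field_simp
  ring

end Constant

/-- For `d = 1`, if the walk is not simple (some jump of size `≥ 2` has positive rate),
then `C₁(x,y) > 0` for all `x` and all `y ≠ 0`. -/
theorem C1_pos_not_simple
    (a : ℤ → ℝ)
    (hpos : ∀ z : ℤ, z ≠ 0 → 0 ≤ a z)
    (hneg : a 0 < 0)
    (hsymm : ∀ z : ℤ, a (-z) = a z)
    (hsum : HasSum a 0)
    (hvar : Summable fun z : ℤ => (z : ℝ) ^ 2 * a z)
    (hirr : AddSubgroup.closure {z : ℤ | 0 < a z} = ⊤)
    (hns : ∃ z : ℤ, 2 ≤ |z| ∧ 0 < a z) :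
    ∀ x y : ℤ, y ≠ 0 → 0 < C1Const a x y := by
  intro x y hy
  have hphi : phi1'' a < 0 := phi1''_neg hpos hvar <| hns.imp fun z ⟨hz, haz⟩ =>
    ⟨by rintro rfl; simp at hz, haz⟩
  have hm : 0 < kernelSlope a := div_pos_of_neg_of_neg hneg hphi
  have hKlt {r : ℤ} (hr : r ≠ 0) : kernelSlope a * |(r : ℝ)| < potentialKernel a r :=
    kernelSlope_mul_abs_lt_potentialKernel hpos hneg hsum hvar hirr hns hr
  have hKle (r : ℤ) : kernelSlope a * |(r : ℝ)| ≤ potentialKernel a r := by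
    rcases eq_or_ne r 0 with rfl | hr
    · simp [potentialKernel_zero]
    · exact (hKlt hr).le
  have hKy : 0 < potentialKernel a y := (hKlt hy).trans_le' (by positivity)
  set k := kernelSlope a * y / potentialKernel a y with hk_def
  have hky : k * potentialKernel a y = kernelSlope a * y := div_mul_cancel₀ _ hKy.ne'
  have hk : |k| < 1 := by
    rw [hk_def, abs_div, abs_mul, abs_of_pos hm, abs_of_pos hKy, div_lt_one hKy]
    exact hKlt hy
  have hρ := rho1_of_ne_zero a hy
  rw [C1Const_eq_twoPointPotential_div hneg hphi x (hρ ▸ hKy.ne'), hρ]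
  refine div_pos ?_ (mul_pos (mul_pos (by linarith) pi_pos) (gam1_pos hphi))
  exact twoPointPotential_rho1_pos hpos hsymm hsum hvar hirr hns hm hKle hk hy hky x
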